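/- arXiv:1507.00201 — 3 statements merged into one kernel-verified Lean document; each statement's English description precedes it below -/
import Mathlib

section
/- Let M ≥ 1 and K ≥ 2 be natural numbers, let I be a subset of ℂ^M not containing the zero vector, let Ω be an arbitrary type, and let g : ℂ^M → Ω and h : Matrix (Fin M) (Fin K) ℂ → Ω be functions. Suppose that for every matrix A ∈ ℂ^{M×K} and every vector s ∈ ℂ^K such that A·s ∈ I, one has g(A·s) = h(A). Then g is constant on I, i.e., for all x, y ∈ I, g(x) = g(y). -/
/-- Theorem 1 of the paper (case K > 1): any instantaneous generalization of RTFs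
to K ≥ 2 sources is constant. -/
theorem no_instantaneous_generalization
    (M K : ℕ) (hM : 1 ≤ M) (hK : 2 ≤ K)
    (I : Set (Fin M → ℂ)) (hI : (0 : Fin M → ℂ) ∉ I)
    (Ω : Type*) (g : (Fin M → ℂ) → Ω) (h : Matrix (Fin M) (Fin K) ℂ → Ω)
    (hgh : ∀ (A : Matrix (Fin M) (Fin K) ℂ) (s : Fin K → ℂ),
      A.mulVec s ∈ I → g (A.mulVec s) = h A) :
    ∀ x ∈ I, ∀ y ∈ I, g x = g y := by
  intro x hx y hy
  -- A single mixing matrix with `x` as column 0 and `y` in every other column produces both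
  -- observations, from the unit source vectors at indices 0 and 1.
  let A : Matrix (Fin M) (Fin K) ℂ :=
    Matrix.of fun i j => if j = ⟨0, by omega⟩ then x i else y i
  have hAx : A.mulVec (Pi.single ⟨0, by omega⟩ 1) = x := by
    ext i
    simp [A, Matrix.mulVec_single_one]
  have hAy : A.mulVec (Pi.single ⟨1, by omega⟩ 1) = y := by
    ext i
    simp [A, Matrix.mulVec_single_one]
  have h1 := hgh A _ (hAx.symm ▸ hx)
  have h2 := hgh A _ (hAy.symm ▸ hy)
  rw [hAx] at h1
  rw [hAy] at h2
  exact h1.trans h2.symm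
end

section
/- Let M, K ≥ 1 be natural numbers with K ≥ M, let I be a subset of ℂ^M not containing the zero vector, let Ω be an arbitrary type, and let g : ℂ^M → Ω and h : Matrix (Fin M) (Fin K) ℂ → Ω be functions. Suppose that for every matrix A ∈ ℂ^{M×K} and every vector s ∈ ℂ^K such that A·s ∈ I, one has g(A·s) = h(A). Then g is constant on I, i.e., for all x, y ∈ I, g(x) = g(y). -/
/-- Theorem 1 of the paper, case K ≥ M: any instantaneous generalization of RTFs
with at least as many sources as microphones is constant. -/
theorem no_instantaneous_generalization_wide
    (M K : ℕ) (hM : 1 ≤ M) (hK1 : 1 ≤ K) (hKM : M ≤ K)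
    (I : Set (Fin M → ℂ)) (hI : (0 : Fin M → ℂ) ∉ I)
    (Ω : Type*) (g : (Fin M → ℂ) → Ω) (h : Matrix (Fin M) (Fin K) ℂ → Ω)
    (hgh : ∀ (A : Matrix (Fin M) (Fin K) ℂ) (s : Fin K → ℂ),
      A.mulVec s ∈ I → g (A.mulVec s) = h A) :
    ∀ x ∈ I, ∀ y ∈ I, g x = g y := by
  -- `A = [1 | 0]` has full row rank: it sends `x` padded with zeros back to `x`.
  let A : Matrix (Fin M) (Fin K) ℂ := fun i j => if Fin.castLE hKM i = j then 1 else 0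
  have surj : ∀ x : Fin M → ℂ, ∃ s : Fin K → ℂ, A.mulVec s = x := by
    intro x
    refine ⟨fun j => if hj : (j : ℕ) < M then x ⟨j, hj⟩ else 0, ?_⟩
    ext i
    simp only [A, Matrix.mulVec, dotProduct, ite_mul, one_mul, zero_mul, Finset.sum_ite_eq,
      Finset.mem_univ, if_true]
    simp
  have key : ∀ x ∈ I, g x = h A := by
    intro x hx
    obtain ⟨s, rfl⟩ := surj x
    exact hgh A s hx
  intro x hx y hy
  rw [key x hx, key y hy]
end

section
/- Let A ∈ ℂ^{M×K} and S ∈ ℂ^{K×K} be complex matrices with det(S) ≠ 0, and set X = A·S. Let ξ₀ : Fin K → Fin M be an injective row-selection map such that det(A restricted to rows ξ₀) ≠ 0. Then for every injective row-selection map ξ : Fin K → Fin M, det(X restricted to rows ξ) / det(X restricted to rows ξ₀) = det(A restricted to rows ξ) / det(A restricted to rows ξ₀). -/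
/-- The normalized Plücker coordinates (generalized RTF) of X = A·S coincide with
those of A, independently of the emitted-signal matrix S. -/
theorem grtf_independent_of_signals
    (M K : ℕ) (A : Matrix (Fin M) (Fin K) ℂ) (S : Matrix (Fin K) (Fin K) ℂ)
    (hS : S.det ≠ 0) (X : Matrix (Fin M) (Fin K) ℂ) (hX : X = A * S)
    (ξ₀ : Fin K → Fin M) (hξ₀ : Function.Injective ξ₀)
    (hA0 : (A.submatrix ξ₀ id).det ≠ 0) :
    ∀ ξ : Fin K → Fin M, Function.Injective ξ →
      (X.submatrix ξ id).det / (X.submatrix ξ₀ id).det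
        = (A.submatrix ξ id).det / (A.submatrix ξ₀ id).det := by
  intro ξ _
  -- Row selection commutes with right multiplication, so every minor of `A * S` is the
  -- corresponding minor of `A` times the common nonzero factor `S.det`.
  have key : ∀ η : Fin K → Fin M,
      (X.submatrix η id).det = (A.submatrix η id).det * S.det := by
    intro η
    rw [hX, ← Matrix.det_mul]
    rfl
  rw [key, key, mul_div_mul_right _ _ hS]
end
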